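/- (Theorem 5.1, analytic form.) Let $\kappa_1>1$, let $\Omega\subseteq\mathbb{R}^2$ be open and simply connected, let $S:\Omega\to\mathbb{R}^2$ be $C^1$, and let $C<0$ be a constant with $\sqrt{\kappa_1^2-1}\,|Sx| < |C|$ for all $x\in\Omega$. Then there exists a $C^2$ function $u:\Omega\to\mathbb{R}$ satisfying $\dfrac{\nabla u(x)}{\sqrt{\kappa_1^2+(\kappa_1^2-1)|\nabla u(x)|^2}} = \dfrac{Sx}{C}$ on $\Omega$ if and only if $\big(C^2-(\kappa_1^2-1)|Sx|^2\big)\,\mathrm{curl}\,S(x) = \dfrac{\kappa_1^2-1}{2}\,\big(S\times \nabla(|S|^2)\big)(x)$ for all $x\in\Omega$. -/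

import Mathlib

noncomputable section

/-- Euclidean inner product in `ℝ³`. -/
def dot3 (x y : Fin 3 → ℝ) : ℝ := x 0 * y 0 + x 1 * y 1 + x 2 * y 2

/-- Euclidean norm in `ℝ³`. -/
def norm3 (x : Fin 3 → ℝ) : ℝ := Real.sqrt (dot3 x x)

/-- Euclidean inner product in `ℝ²`. -/
def dot2 (x y : Fin 2 → ℝ) : ℝ := x 0 * y 0 + x 1 * y 1

/-- Euclidean norm in `ℝ²`. -/
def norm2 (x : Fin 2 → ℝ) : ℝ := Real.sqrt (dot2 x x)

/-- The embedding `x = (x₁,x₂) ↦ (x₁,x₂,0)` of the source plane into `ℝ³`. -/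
def lift2 (x : Fin 2 → ℝ) : Fin 3 → ℝ := ![x 0, x 1, 0]

/-- Cross product in `ℝ³`. -/
def cross3 (x y : Fin 3 → ℝ) : Fin 3 → ℝ :=
  ![x 1 * y 2 - x 2 * y 1, x 2 * y 0 - x 0 * y 2, x 0 * y 1 - x 1 * y 0]

/-- Partial derivative `∂f/∂xᵢ` of a scalar function on `ℝ²`. -/
def pd (i : Fin 2) (f : (Fin 2 → ℝ) → ℝ) (x : Fin 2 → ℝ) : ℝ :=
  fderiv ℝ f x (Pi.single i 1)

/-- Gradient of a scalar function on `ℝ²`. -/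
def grad2 (f : (Fin 2 → ℝ) → ℝ) (x : Fin 2 → ℝ) : Fin 2 → ℝ :=
  ![pd 0 f x, pd 1 f x]

/-- Two-dimensional curl of a plane field: `curl V = ∂V₂/∂x₁ - ∂V₁/∂x₂`. -/
def curl2 (V : (Fin 2 → ℝ) → (Fin 2 → ℝ)) (x : Fin 2 → ℝ) : ℝ :=
  pd 0 (fun y => V y 1) x - pd 1 (fun y => V y 0) x

/-- Two-dimensional cross product `a × b = a₁b₂ - a₂b₁`. -/
def cross2v (a b : Fin 2 → ℝ) : ℝ := a 0 * b 1 - a 1 * b 0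

end

/-- The real line with the discrete topology. -/
def DiscreteReal : Type := ℝ

noncomputable instance : AddCommGroup DiscreteReal := inferInstanceAs (AddCommGroup ℝ)

instance : TopologicalSpace DiscreteReal := ⊥

instance : DiscreteTopology DiscreteReal := ⟨rfl⟩

open Set Metric in
/-- A 1-form on a simply connected open set that has local primitives has a global primitive. -/
theorem exists_global_primitive {E : Type*} [NormedAddCommGroup E] [NormedSpace ℝ E]
    {Ω : Set E} (hΩ : IsOpen Ω) (hsc : SimplyConnectedSpace Ω) (ω : E → E →L[ℝ] ℝ)
    (hloc : ∀ x ∈ Ω, ∃ r > 0, ball x r ⊆ Ω ∧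
      ∃ f : E → ℝ, ∀ y ∈ ball x r, HasFDerivAt f (ω y) y) :
    ∃ u : E → ℝ, ∀ x ∈ Ω, HasFDerivAt u (ω x) x := by
  classical
  have hloc' : ∀ x : Ω, ∃ r > 0, ball (x : E) r ⊆ Ω ∧
      ∃ f : E → ℝ, ∀ y ∈ ball (x : E) r, HasFDerivAt f (ω y) y := fun x => hloc x x.2
  choose r hr hsub f hf using hloc'
  have hconst : ∀ i j : Ω, ∃ c : ℝ, ∀ y ∈ ball (i : E) (r i) ∩ ball (j : E) (r j),
      f i y - f j y = c := by
    intro i j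
    rcases (ball (i : E) (r i) ∩ ball (j : E) (r j)).eq_empty_or_nonempty with h | ⟨z, hz⟩
    · exact ⟨0, by simp [h]⟩
    refine ⟨f i z - f j z, fun y hy => ?_⟩
    have hd : ∀ y ∈ ball (i : E) (r i) ∩ ball (j : E) (r j),
        HasFDerivAt (fun y => f i y - f j y) (0 : E →L[ℝ] ℝ) y := by
      intro y hy
      simpa using (hf i y hy.1).fun_sub (hf j y hy.2)
    have ho : IsOpen (ball (i : E) (r i) ∩ ball (j : E) (r j)) := isOpen_ball.inter isOpen_ball
    exact ((convex_ball _ _).inter (convex_ball _ _)).is_const_of_fderivWithin_eq_zero (𝕜 := ℝ)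
      (f := fun y => f i y - f j y)
      (fun y hy => (hd y hy).differentiableAt.differentiableWithinAt)
      (fun y hy => by
        rw [fderivWithin_of_isOpen ho hy]; exact (hd y hy).fderiv) hy hz
  let toD : ℝ → DiscreteReal := fun a => a
  let ofD : DiscreteReal → ℝ := fun a => a
  let Z : FiberBundleCore Ω Ω DiscreteReal :=
    { baseSet := fun i => Subtype.val ⁻¹' ball (i : E) (r i)
      isOpen_baseSet := fun i => isOpen_ball.preimage continuous_subtype_val
      indexAt := fun i => i
      mem_baseSet_at := fun i => mem_ball_self (hr i)
      coordChange := fun i j x v => toD (ofD v + (f i x - f j x))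
      coordChange_self := by
        intro i x hx v
        have h : ∀ a b : ℝ, a + (b - b) = a := fun a b => by ring
        exact h (ofD v) (f i x)
      continuousOn_coordChange := by
        intro i j
        obtain ⟨c, hc⟩ := hconst i j
        have : Continuous (fun p : Ω × DiscreteReal => toD (ofD p.2 + c)) :=
          (continuous_of_discreteTopology (f := fun v : DiscreteReal => toD (ofD v + c))).comp
            continuous_snd
        refine this.continuousOn.congr ?_
        rintro ⟨x, v⟩ ⟨hx, -⟩
        simp only
        rw [hc x hx]
      coordChange_comp := by
        intro i j k x hx v
        have h : ∀ a b c d : ℝ, a + (b - c) + (c - d) = a + (b - d) := fun a b c d => by ring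
        exact h (ofD v) (f i x) (f j x) (f k x) }
  have cov : IsCoveringMap Z.proj :=
    FiberBundle.isCoveringMap (F := DiscreteReal) (E := Z.Fiber)
  have := hΩ.locallyPathConnectedSpace
  obtain ⟨a₀⟩ : Nonempty Ω := inferInstance
  obtain ⟨s, ⟨-, hs⟩, -⟩ := cov.existsUnique_continuousMap_lifts (ContinuousMap.id Ω) a₀
    ⟨a₀, toD 0⟩ rfl
  have hs1 : ∀ x, (s x).1 = x := fun x => congrFun hs x
  refine ⟨fun x => if hx : x ∈ Ω then f ⟨x, hx⟩ x + ofD (s ⟨x, hx⟩).2 else 0, fun x hx => ?_⟩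
  set i : Ω := ⟨x, hx⟩
  let w : Ω → DiscreteReal := fun y => (Z.localTriv i (s y)).2
  have hw : ∀ y : Ω, ofD (w y) = ofD (s y).2 + (f y y - f i y) := by
    intro y
    simp only [w, FiberBundleCore.localTriv_apply]
    simp only [Z, toD, ofD, hs1]
  have hwc : ContinuousAt w i := by
    refine continuous_snd.continuousAt.comp ?_
    refine ContinuousAt.comp (g := Z.localTriv i) ?_ s.continuous.continuousAt
    refine (Z.localTriv i).continuousAt ?_
    rw [FiberBundleCore.mem_localTriv_source, ← FiberBundleCore.baseSet_at, hs1]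
    exact Z.mem_baseSet_at i
  have hev : ∀ᶠ y in nhds i, w y = w i := by
    exact hwc.eventually (IsOpen.mem_nhds (isOpen_discrete {w i}) rfl)
  have hev2 : ∀ᶠ y in nhds x, ∃ hy : y ∈ Ω, w ⟨y, hy⟩ = w i := by
    rw [nhds_subtype_eq_comap, Filter.eventually_comap] at hev
    filter_upwards [hev, hΩ.mem_nhds hx] with y h1 h2
    exact ⟨h2, h1 ⟨y, h2⟩ rfl⟩
  refine ((hf i x (mem_ball_self (hr i))).add_const (ofD (w i))).congr_of_eventuallyEq ?_
  filter_upwards [hev2] with y ⟨hy, h⟩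
  rw [dif_pos hy, ← h, hw]
  ring

theorem norm2_sq (x : Fin 2 → ℝ) : norm2 x ^ 2 = x 0 ^ 2 + x 1 ^ 2 := by
  unfold norm2 dot2
  rw [Real.sq_sqrt (by nlinarith [sq_nonneg (x 0), sq_nonneg (x 1)])]
  ring

/-- The explicit gradient field determined by the equation. -/
noncomputable def solField (κ C : ℝ) (S : (Fin 2 → ℝ) → (Fin 2 → ℝ)) (y : Fin 2 → ℝ) (i : Fin 2) : ℝ :=
  -κ * S y i / Real.sqrt (C ^ 2 - (κ ^ 2 - 1) * norm2 (S y) ^ 2)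

/-- Pointwise inversion of the equation. -/
theorem pointwise_iff (κ C : ℝ) (hκ : 1 < κ) (hC : C < 0) (p s : Fin 2 → ℝ)
    (hD : 0 < C ^ 2 - (κ ^ 2 - 1) * norm2 s ^ 2) :
    (Real.sqrt (κ ^ 2 + (κ ^ 2 - 1) * norm2 p ^ 2))⁻¹ • p = C⁻¹ • s ↔
      ∀ i, p i = -κ * s i / Real.sqrt (C ^ 2 - (κ ^ 2 - 1) * norm2 s ^ 2) := by
  have hk : 0 < κ ^ 2 - 1 := by nlinarith
  have hCne := hC.ne
  have hA : 0 < κ ^ 2 + (κ ^ 2 - 1) * norm2 p ^ 2 := by positivity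
  set A := Real.sqrt (κ ^ 2 + (κ ^ 2 - 1) * norm2 p ^ 2) with hAdef
  set B := Real.sqrt (C ^ 2 - (κ ^ 2 - 1) * norm2 s ^ 2) with hBdef
  have hA0 : 0 < A := Real.sqrt_pos.2 hA
  have hB0 : 0 < B := Real.sqrt_pos.2 hD
  have hA2 : A ^ 2 = κ ^ 2 + (κ ^ 2 - 1) * (p 0 ^ 2 + p 1 ^ 2) := by
    rw [hAdef, Real.sq_sqrt hA.le, norm2_sq]
  have hB2 : B ^ 2 = C ^ 2 - (κ ^ 2 - 1) * (s 0 ^ 2 + s 1 ^ 2) := by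
    rw [hBdef, Real.sq_sqrt hD.le, norm2_sq]
  have hAB : (∀ i, C * p i = A * s i) ↔ ∀ i, B * p i = -κ * s i := by
    constructor
    · intro h
      have h0 := h 0
      have h1 := h 1
      -- A * B = -κ * C
      have e : (A * B) ^ 2 = (-κ * C) ^ 2 := by
        have : C ^ 2 * (p 0 ^ 2 + p 1 ^ 2) = A ^ 2 * (s 0 ^ 2 + s 1 ^ 2) := by
          linear_combination (C * p 0 + A * s 0) * h0 + (C * p 1 + A * s 1) * h1
        rw [mul_pow, hB2]
        linear_combination (C ^ 2) * hA2 + (κ ^ 2 - 1) * this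
      have e2 : A * B = -κ * C := by
        refine (pow_left_inj₀ (by positivity) (by nlinarith) two_ne_zero).1 e
      intro i
      refine mul_left_cancel₀ hCne ?_
      linear_combination B * h i + s i * e2
    · intro h
      have h0 := h 0
      have h1 := h 1
      have e : (A * B) ^ 2 = (-κ * C) ^ 2 := by
        have : B ^ 2 * (p 0 ^ 2 + p 1 ^ 2) = κ ^ 2 * (s 0 ^ 2 + s 1 ^ 2) := by
          linear_combination (B * p 0 - κ * s 0) * h0 + (B * p 1 - κ * s 1) * h1
        rw [mul_pow, hA2]
        linear_combination κ ^ 2 * hB2 + (κ ^ 2 - 1) * this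
      have e2 : A * B = -κ * C := by
        refine (pow_left_inj₀ (by positivity) (by nlinarith) two_ne_zero).1 e
      intro i
      refine mul_left_cancel₀ hB0.ne' ?_
      linear_combination C * h i - s i * e2
  calc A⁻¹ • p = C⁻¹ • s ↔ ∀ i, C * p i = A * s i := by
        rw [funext_iff]
        refine forall_congr' fun i => ?_
        simp only [Pi.smul_apply, smul_eq_mul]
        rw [inv_mul_eq_div, inv_mul_eq_div, div_eq_div_iff hA0.ne' hCne]
        constructor <;> intro h <;> linarith
    _ ↔ ∀ i, B * p i = -κ * s i := hAB
    _ ↔ _ := by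
        refine forall_congr' fun i => ?_
        rw [eq_div_iff hB0.ne', mul_comm]

theorem bound_pos (κ C : ℝ) (hκ : 1 < κ) (s : Fin 2 → ℝ)
    (h : Real.sqrt (κ ^ 2 - 1) * norm2 s < |C|) :
    0 < C ^ 2 - (κ ^ 2 - 1) * norm2 s ^ 2 := by
  have hk : 0 ≤ κ ^ 2 - 1 := by nlinarith
  have h0 : 0 ≤ Real.sqrt (κ ^ 2 - 1) * norm2 s := mul_nonneg (Real.sqrt_nonneg _) (Real.sqrt_nonneg _)
  have := pow_lt_pow_left₀ h h0 two_ne_zero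
  rw [mul_pow, Real.sq_sqrt hk, sq_abs] at this
  linarith

theorem curl_solField (κ C : ℝ) (S : (Fin 2 → ℝ) → (Fin 2 → ℝ)) (x : Fin 2 → ℝ)
    (hS : DifferentiableAt ℝ S x)
    (hD : 0 < C ^ 2 - (κ ^ 2 - 1) * norm2 (S x) ^ 2) :
    curl2 (solField κ C S) x =
      -κ / Real.sqrt (C ^ 2 - (κ ^ 2 - 1) * norm2 (S x) ^ 2) ^ 3 *
      ((C ^ 2 - (κ ^ 2 - 1) * norm2 (S x) ^ 2) * curl2 S x -
          (κ ^ 2 - 1) / 2 * cross2v (S x) (grad2 (fun y => norm2 (S y) ^ 2) x)) := by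
  have hc : ∀ i, HasFDerivAt (fun y => S y i) (fderiv ℝ (fun y => S y i) x) x := fun i =>
    ((differentiableAt_pi.1 hS) i).hasFDerivAt
  have hN : HasFDerivAt (fun y => norm2 (S y) ^ 2)
      ((2 * S x 0) • fderiv ℝ (fun y => S y 0) x + (2 * S x 1) • fderiv ℝ (fun y => S y 1) x) x := by
    simp only [norm2_sq]
    simp only [pow_two]
    refine (((hc 0).fun_mul (hc 0)).fun_add ((hc 1).fun_mul (hc 1))).congr_fderiv ?_
    ext v
    simp
    ring
  have hDd := (hN.const_mul (κ ^ 2 - 1)).const_sub (C ^ 2)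
  have hB := hDd.sqrt hD.ne'
  set B := Real.sqrt (C ^ 2 - (κ ^ 2 - 1) * norm2 (S x) ^ 2) with hBdef
  have hB0 : 0 < B := Real.sqrt_pos.2 hD
  have hB2 : C ^ 2 - (κ ^ 2 - 1) * norm2 (S x) ^ 2 = B ^ 2 := (Real.sq_sqrt hD.le).symm
  have hF : ∀ i, ∀ v, fderiv ℝ (fun y => solField κ C S y i) x v = 
      -κ * (fderiv ℝ (fun y => S y i) x v / B + S x i * ((κ ^ 2 - 1) * 
       (S x 0 * fderiv ℝ (fun y => S y 0) x v + S x 1 * fderiv ℝ (fun y => S y 1) x v)) / B ^ 3) := by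
    intro i v
    have := ((hc i).const_mul (-κ)).fun_mul ((hasDerivAt_inv hB0.ne').comp_hasFDerivAt x hB)
    simp only [Function.comp_apply, ← div_eq_mul_inv] at this
    unfold solField
    rw [this.fderiv]
    simp
    field_simp
    ring
  simp only [curl2, pd, hF, cross2v, grad2, hN.fderiv, hB2]
  simp
  field_simp
  ring

theorem curl_grad (u : (Fin 2 → ℝ) → ℝ) (x : Fin 2 → ℝ) (hu : ContDiffAt ℝ 2 u x) :
    curl2 (grad2 u) x = 0 := by
  have hsym := hu.isSymmSndFDerivAt (by simp)
  have hd : DifferentiableAt ℝ (fderiv ℝ u) x :=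
    (hu.fderiv_right (m := 1) (by norm_num)).differentiableAt one_ne_zero
  have h : ∀ v w, fderiv ℝ (fun y => fderiv ℝ u y v) x w = fderiv ℝ (fderiv ℝ u) x w v := by
    intro v w
    have := hd.hasFDerivAt.clm_apply (hasFDerivAt_const v x)
    rw [this.fderiv]; simp
  simp only [curl2, pd, grad2, Matrix.cons_val_zero, Matrix.cons_val_one, h]
  rw [hsym]; simp

theorem curl2_congr {V W : (Fin 2 → ℝ) → (Fin 2 → ℝ)} {x : Fin 2 → ℝ} (h : V =ᶠ[nhds x] W) :
    curl2 V x = curl2 W x := by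
  have h' : ∀ i, (fun y => V y i) =ᶠ[nhds x] (fun y => W y i) := fun i =>
    h.mono fun y hy => by simp only [hy]
  simp only [curl2, pd, (h' _).fderiv_eq]

theorem exists_primitive_of_curl (Ω : Set (Fin 2 → ℝ)) (hΩ : IsOpen Ω)
    (hsc : SimplyConnectedSpace Ω) (V : (Fin 2 → ℝ) → (Fin 2 → ℝ)) (hV : ContDiffOn ℝ 1 V Ω)
    (hcurl : ∀ x ∈ Ω, curl2 V x = 0) :
    ∃ u : (Fin 2 → ℝ) → ℝ, ContDiffOn ℝ 2 u Ω ∧ ∀ x ∈ Ω, grad2 u x = V x := by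
  let P : Fin 2 → ((Fin 2 → ℝ) →L[ℝ] ℝ) := fun i => ContinuousLinearMap.proj i
  let ω : (Fin 2 → ℝ) → ((Fin 2 → ℝ) →L[ℝ] ℝ) := fun y => V y 0 • P 0 + V y 1 • P 1
  have hc : ∀ i, ContDiffOn ℝ 1 (fun y => V y i) Ω := fun i => (contDiffOn_pi.1 hV) i
  have hω : ContDiffOn ℝ 1 ω Ω := ((hc 0).smul contDiffOn_const).add ((hc 1).smul contDiffOn_const)
  have hωd : DifferentiableOn ℝ ω Ω := hω.differentiableOn one_ne_zero
  have hsymm : ∀ a ∈ Ω, ∀ x y, fderiv ℝ ω a x y = fderiv ℝ ω a y x := by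
    intro a ha x y
    have hd : ∀ i, HasFDerivAt (fun y => V y i) (fderiv ℝ (fun y => V y i) a) a := fun i =>
      (((hc i).differentiableOn one_ne_zero).differentiableAt (hΩ.mem_nhds ha)).hasFDerivAt
    have h := ((hd 0).smul_const (P 0)).fun_add ((hd 1).smul_const (P 1))
    have hL : ∀ (L : (Fin 2 → ℝ) →L[ℝ] ℝ) (z : Fin 2 → ℝ),
        L z = z 0 * L (Pi.single 0 1) + z 1 * L (Pi.single 1 1) := by
      intro L z
      have : z = z 0 • Pi.single 0 1 + z 1 • Pi.single 1 1 := by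
        ext i; fin_cases i <;> simp
      conv_lhs => rw [this]
      simp
    have hcu := hcurl a ha
    simp only [curl2, pd] at hcu
    rw [show fderiv ℝ ω a = _ from h.fderiv]
    simp only [add_apply, ContinuousLinearMap.smulRight_apply,
      smul_apply, smul_eq_mul, P, ContinuousLinearMap.proj_apply]
    rw [hL _ x, hL _ y, hL (fderiv ℝ (fun y => V y 1) a) x, hL (fderiv ℝ (fun y => V y 1) a) y]
    linear_combination (x 0 * y 1 - x 1 * y 0) * hcu
  obtain ⟨u, hu⟩ := exists_global_primitive hΩ hsc ω (by
    intro x hx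
    obtain ⟨r, hr, hsub⟩ := Metric.isOpen_iff.1 hΩ x hx
    exact ⟨r, hr, hsub, (convex_ball x r).exists_forall_hasFDerivAt_of_fderiv_symmetric
      Metric.isOpen_ball (hωd.mono hsub) (fun a ha => hsymm a (hsub ha))⟩)
  refine ⟨u, ?_, fun x hx => ?_⟩
  · rw [show (2 : WithTop ℕ∞) = 1 + 1 by norm_num, contDiffOn_succ_iff_fderiv_of_isOpen hΩ]
    refine ⟨fun x hx => (hu x hx).differentiableAt.differentiableWithinAt, by simp, ?_⟩
    exact hω.congr fun x hx => (hu x hx).fderiv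
  · ext i
    fin_cases i <;> simp [grad2, pd, (hu x hx).fderiv, ω, P]

/-- Theorem 5.1, analytic form. A `C²` solution `u` of
`∇u/√(κ₁² + (κ₁²-1)|∇u|²) = S/C` exists on the simply connected domain `Ω` iff `S`
satisfies the compatibility condition (5.10). -/
theorem imaging_same_index (κ1 C : ℝ) (hκ1 : 1 < κ1) (hC : C < 0)
    (Ω : Set (Fin 2 → ℝ)) (hΩ : IsOpen Ω) (hsc : SimplyConnectedSpace Ω)
    (S : (Fin 2 → ℝ) → (Fin 2 → ℝ)) (hS : ContDiffOn ℝ 1 S Ω)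
    (hbound : ∀ x ∈ Ω, Real.sqrt (κ1 ^ 2 - 1) * norm2 (S x) < |C|) :
    (∃ u : (Fin 2 → ℝ) → ℝ, ContDiffOn ℝ 2 u Ω ∧
        ∀ x ∈ Ω,
          (Real.sqrt (κ1 ^ 2 + (κ1 ^ 2 - 1) * norm2 (grad2 u x) ^ 2))⁻¹ • grad2 u x =
            C⁻¹ • S x) ↔
      ∀ x ∈ Ω,
        (C ^ 2 - (κ1 ^ 2 - 1) * norm2 (S x) ^ 2) * curl2 S x =
          (κ1 ^ 2 - 1) / 2 * cross2v (S x) (grad2 (fun y => norm2 (S y) ^ 2) x) := by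
  have hD : ∀ x ∈ Ω, 0 < C ^ 2 - (κ1 ^ 2 - 1) * norm2 (S x) ^ 2 := fun x hx =>
    bound_pos κ1 C hκ1 (S x) (hbound x hx)
  have hiff : ∀ u : (Fin 2 → ℝ) → ℝ, ∀ x ∈ Ω,
      ((Real.sqrt (κ1 ^ 2 + (κ1 ^ 2 - 1) * norm2 (grad2 u x) ^ 2))⁻¹ • grad2 u x =
            C⁻¹ • S x ↔ grad2 u x = solField κ1 C S x) := fun u x hx => by
    rw [pointwise_iff κ1 C hκ1 hC _ _ (hD x hx), funext_iff]
    rfl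
  have hcurl : ∀ x ∈ Ω, (curl2 (solField κ1 C S) x = 0 ↔
        (C ^ 2 - (κ1 ^ 2 - 1) * norm2 (S x) ^ 2) * curl2 S x =
          (κ1 ^ 2 - 1) / 2 * cross2v (S x) (grad2 (fun y => norm2 (S y) ^ 2) x)) := by
    intro x hx
    rw [curl_solField κ1 C S x ((hS.differentiableOn one_ne_zero).differentiableAt
      (hΩ.mem_nhds hx)) (hD x hx), mul_eq_zero, sub_eq_zero, or_iff_right]
    exact div_ne_zero (by linarith) (pow_ne_zero _ (Real.sqrt_pos.2 (hD x hx)).ne')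
  constructor
  · rintro ⟨u, hu, h⟩ x hx
    rw [← hcurl x hx, ← curl_grad u x (hu.contDiffAt (hΩ.mem_nhds hx))]
    refine curl2_congr ?_
    filter_upwards [hΩ.mem_nhds hx] with y hy
    exact ((hiff u y hy).1 (h y hy)).symm
  · intro h
    obtain ⟨u, hu, hg⟩ := exists_primitive_of_curl Ω hΩ hsc (solField κ1 C S) (by
      rw [contDiffOn_pi]
      intro i
      have hc : ∀ i, ContDiffOn ℝ 1 (fun y => S y i) Ω := fun i => (contDiffOn_pi.1 hS) i
      have hN : ContDiffOn ℝ 1 (fun y => C ^ 2 - (κ1 ^ 2 - 1) * norm2 (S y) ^ 2) Ω := by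
        simp only [norm2_sq]
        exact contDiffOn_const.sub (contDiffOn_const.mul (((hc 0).pow 2).add ((hc 1).pow 2)))
      exact (contDiffOn_const.mul (hc i)).div (hN.sqrt fun x hx => (hD x hx).ne')
        fun x hx => (Real.sqrt_pos.2 (hD x hx)).ne') (fun x hx => (hcurl x hx).2 (h x hx))
    exact ⟨u, hu, fun x hx => (hiff u x hx).2 (hg x hx)⟩
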